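/- arXiv:1605.03046 — 2 statements merged into one kernel-verified Lean document; each statement's English description precedes it below -/
import Mathlib

section
/- Fix positive reals p₋₁, p₀, p₁ with p₁ = p₋₁ (zero drift), let P(1) = p₋₁ + p₀ + p₁ and P″(1) = 2p₋₁, and let w_{n,k} denote the total weight of Motzkin walks of length n with exactly k sign changes. Then, with σ = (1/2)·√(P″(1)/P(1)), the number of sign changes rescaled by √n converges in distribution to the half-normal law H(σ): for every real x ≥ 0, lim_{n→∞} (Σ_{k ≤ x√n} w_{n,k})/P(1)ⁿ = ∫_0^x √(2/(πσ²)) · exp(−t²/(2σ²)) dt. -/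
open scoped BigOperators Classical

/-- Value of a step encoded by `Fin 3`: `0 ↦ -1`, `1 ↦ 0`, `2 ↦ +1`. -/
def stepVal (s : Fin 3) : ℤ := (s : ℤ) - 1

/-- Weight of a single step: `p₋₁` for `-1`, `p₀` for `0`, `p₁` for `+1`. -/
def stepWeight (pm p0 p1 : ℝ) (s : Fin 3) : ℝ :=
  if s = 0 then pm else if s = 1 then p0 else p1

/-- Weight of a Motzkin walk (product of its step weights). -/
def walkWeight (pm p0 p1 : ℝ) {n : ℕ} (w : Fin n → Fin 3) : ℝ :=
  ∏ i, stepWeight pm p0 p1 (w i)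

/-- Partial sum `ω_j` of the walk `w`. -/
def psum {n : ℕ} (w : Fin n → Fin 3) (j : ℕ) : ℤ :=
  ∑ i ∈ Finset.univ.filter (fun i : Fin n => (i : ℕ) < j), stepVal (w i)

/-- Total weight of Motzkin bridges of length `n`. -/
noncomputable def bridgeW (pm p0 p1 : ℝ) (n : ℕ) : ℝ :=
  ∑ w ∈ Finset.univ.filter (fun w : Fin n → Fin 3 => psum w n = 0),
    walkWeight pm p0 p1 w

/-- Number of returns to zero of a walk of length `n`. -/
def retZero {n : ℕ} (w : Fin n → Fin 3) : ℕ :=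
  ((Finset.Icc 1 n).filter (fun j => psum w j = 0)).card

/-- Total weight of walks of length `n` with exactly `k` returns to zero. -/
noncomputable def walkRetW (pm p0 p1 : ℝ) (n k : ℕ) : ℝ :=
  ∑ w ∈ Finset.univ.filter (fun w : Fin n → Fin 3 => retZero w = k),
    walkWeight pm p0 p1 w

/-- Number of sign changes of a walk of length `n`. -/
def signChanges {n : ℕ} (w : Fin n → Fin 3) : ℕ :=
  (((Finset.range (n+1)) ×ˢ (Finset.range (n+1))).filter
    (fun p => p.1 < p.2 ∧ psum w p.1 * psum w p.2 < 0 ∧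
      ∀ l ∈ Finset.Ioo p.1 p.2, psum w l = 0)).card

/-- Total weight of bridges of length `n` with exactly `k` sign changes. -/
noncomputable def bridgeSignW (pm p0 p1 : ℝ) (n k : ℕ) : ℝ :=
  ∑ w ∈ Finset.univ.filter
      (fun w : Fin n → Fin 3 => psum w n = 0 ∧ signChanges w = k),
    walkWeight pm p0 p1 w

/-- Total weight of positive excursions of length `n`. -/
noncomputable def posExcW (pm p0 p1 : ℝ) (n : ℕ) : ℝ :=
  ∑ w ∈ Finset.univ.filter
      (fun w : Fin n → Fin 3 => psum w n = 0 ∧ ∀ j ∈ Finset.range (n+1), 0 ≤ psum w j),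
    walkWeight pm p0 p1 w

/-- Total weight of negative excursions of length `n`. -/
noncomputable def negExcW (pm p0 p1 : ℝ) (n : ℕ) : ℝ :=
  ∑ w ∈ Finset.univ.filter
      (fun w : Fin n → Fin 3 => psum w n = 0 ∧ ∀ j ∈ Finset.range (n+1), psum w j ≤ 0),
    walkWeight pm p0 p1 w

/-- A positive bridge: a bridge whose last nonzero partial sum is positive. -/
def IsPosBridge {n : ℕ} (w : Fin n → Fin 3) : Prop :=
  psum w n = 0 ∧ ∃ j ∈ Finset.range (n+1),
    0 < psum w j ∧ ∀ l ∈ Finset.Ioc j n, psum w l = 0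

/-- A negative bridge: a bridge whose last nonzero partial sum is negative. -/
def IsNegBridge {n : ℕ} (w : Fin n → Fin 3) : Prop :=
  psum w n = 0 ∧ ∃ j ∈ Finset.range (n+1),
    psum w j < 0 ∧ ∀ l ∈ Finset.Ioc j n, psum w l = 0

instance {n : ℕ} (w : Fin n → Fin 3) : Decidable (IsPosBridge w) := by
  unfold IsPosBridge; infer_instance

instance {n : ℕ} (w : Fin n → Fin 3) : Decidable (IsNegBridge w) := by
  unfold IsNegBridge; infer_instance

/-- Total weight of positive bridges of length `n` with `k` sign changes. -/
noncomputable def posBridgeSignW (pm p0 p1 : ℝ) (n k : ℕ) : ℝ :=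
  ∑ w ∈ Finset.univ.filter
      (fun w : Fin n → Fin 3 => IsPosBridge w ∧ signChanges w = k),
    walkWeight pm p0 p1 w

/-- Total weight of negative bridges of length `n` with `k` sign changes. -/
noncomputable def negBridgeSignW (pm p0 p1 : ℝ) (n k : ℕ) : ℝ :=
  ∑ w ∈ Finset.univ.filter
      (fun w : Fin n → Fin 3 => IsNegBridge w ∧ signChanges w = k),
    walkWeight pm p0 p1 w

/-- Total weight of walks of length `n` with `k` sign changes. -/
noncomputable def walkSignW (pm p0 p1 : ℝ) (n k : ℕ) : ℝ :=
  ∑ w ∈ Finset.univ.filter (fun w : Fin n → Fin 3 => signChanges w = k),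
    walkWeight pm p0 p1 w

/-- Height of a walk of length `n` (as a natural number; it is `max_j ω_j ≥ 0`). -/
def height {n : ℕ} (w : Fin n → Fin 3) : ℕ :=
  (Finset.range (n+1)).sup (fun j => (psum w j).toNat)

/-- Total weight of walks of length `n` of height exactly `h`. -/
noncomputable def heightW (pm p0 p1 : ℝ) (n h : ℕ) : ℝ :=
  ∑ w ∈ Finset.univ.filter (fun w : Fin n → Fin 3 => height w = h),
    walkWeight pm p0 p1 w

/-- The number of sign changes of an integer sequence among the indices `0, …, n`. -/
def seqSignChanges (ω : ℕ → ℤ) (n : ℕ) : ℕ :=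
  (((Finset.range (n+1)) ×ˢ (Finset.range (n+1))).filter
    (fun p => p.1 < p.2 ∧ ω p.1 * ω p.2 < 0 ∧ ∀ l ∈ Finset.Ioo p.1 p.2, ω l = 0)).card

/-- The sign of the last nonzero term among `ω 0, …, ω n`, or `0` if there is none. -/
def lastSign (ω : ℕ → ℤ) : ℕ → ℤ
  | 0 => (ω 0).sign
  | n + 1 => if ω (n + 1) = 0 then lastSign ω n else (ω (n + 1)).sign

lemma sum_last_sign_change (ω : ℕ → ℤ) (n : ℕ) (z : ℤ) :
    (∑ i ∈ Finset.range (n + 1),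
      if ω i * z < 0 ∧ ∀ l ∈ Finset.Ioo i (n + 1), ω l = 0 then 1 else 0) =
    if lastSign ω n * z < 0 then 1 else 0 := by
  have hsign (a : ℤ) : a.sign * z < 0 ↔ a * z < 0 := by
    rw [← Int.sign_eq_neg_one_iff_neg, ← Int.sign_eq_neg_one_iff_neg, Int.sign_mul, Int.sign_mul,
      Int.sign_sign]
  induction n with
  | zero =>
    have h : ∀ l ∈ Finset.Ioo 0 1, ω l = 0 := by simp; lia
    simp only [zero_add, Finset.sum_range_one, lastSign, hsign, and_iff_left h]
  | succ n ih =>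
    rw [Finset.sum_range_succ]
    by_cases h : ω (n + 1) = 0
    · simp only [h, lastSign, if_true, zero_mul, lt_irrefl, false_and, if_false, add_zero]
      rw [← ih]
      refine Finset.sum_congr rfl fun i _ => ?_
      congr 1
      simp only [Finset.mem_Ioo, eq_iff_iff, and_congr_right_iff]
      intro _
      constructor
      · intro H l hl
        exact H l ⟨hl.1, by lia⟩
      · intro H l hl
        rcases eq_or_ne l (n + 1) with rfl | h'
        · exact h
        · exact H l ⟨hl.1, by lia⟩
    · rw [Finset.sum_eq_zero]
      · simp [lastSign, h, hsign]
      · intro i hi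
        rw [if_neg]
        rintro ⟨-, H⟩
        exact h (H (n + 1) (by simp at hi ⊢; lia))

lemma seqSignChanges_succ (ω : ℕ → ℤ) (n : ℕ) :
    seqSignChanges ω (n + 1) =
      seqSignChanges ω n + if lastSign ω n * ω (n + 1) < 0 then 1 else 0 := by
  rw [← sum_last_sign_change]
  simp only [seqSignChanges, Finset.card_filter, Finset.sum_product_right]
  rw [Finset.sum_range_succ _ (n + 1)]
  congr 1
  · refine Finset.sum_congr rfl fun j hj => ?_
    rw [Finset.sum_range_succ _ (n + 1), if_neg, add_zero]
    simp at hj ⊢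
    lia
  · rw [Finset.sum_range_succ _ (n + 1), if_neg (by simp), add_zero]
    refine Finset.sum_congr rfl fun i hi => ?_
    simp at hi
    congr 1
    simp [hi]

lemma lastSign_congr {ω η : ℕ → ℤ} {n : ℕ} (h : ∀ j ≤ n, ω j = η j) :
    lastSign ω n = lastSign η n := by
  induction n with
  | zero => simp [lastSign, h]
  | succ n ih => simp [lastSign, h (n + 1) le_rfl, ih fun j hj => h j (by lia)]

lemma seqSignChanges_congr {ω η : ℕ → ℤ} {n : ℕ} (h : ∀ j ≤ n, ω j = η j) :
    seqSignChanges ω n = seqSignChanges η n := by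
  induction n with
  | zero => simp [seqSignChanges, Finset.filter_singleton]
  | succ n ih =>
    rw [seqSignChanges_succ, seqSignChanges_succ, ih fun j hj => h j (by lia),
      lastSign_congr (η := η) fun j hj => h j (by lia), h (n + 1) le_rfl]

lemma lastSign_mul_self (ω : ℕ → ℤ) (n : ℕ) : lastSign ω n * ω n = |ω n| := by
  cases n with
  | zero => simp [lastSign]
  | succ n =>
    by_cases h : ω (n + 1) = 0 <;> simp [lastSign, h]

lemma lastSign_cases (ω : ℕ → ℤ) (n : ℕ) :
    lastSign ω n = 0 ∨ lastSign ω n = 1 ∨ lastSign ω n = -1 := by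
  induction n with
  | zero => rcases Int.sign_trichotomy (ω 0) with h | h | h <;> simp [lastSign, h]
  | succ n ih =>
    by_cases h : ω (n + 1) = 0
    · simpa [lastSign, h] using ih
    · rcases Int.sign_trichotomy (ω (n + 1)) with h' | h' | h' <;> simp [lastSign, h, h']

lemma psum_snoc_of_le {n : ℕ} (w : Fin n → Fin 3) (s : Fin 3) {j : ℕ} (hj : j ≤ n) :
    psum (Fin.snoc w s : Fin (n + 1) → Fin 3) j = psum w j := by
  simp only [psum, Finset.sum_filter, Fin.sum_univ_castSucc]
  simp [hj]

lemma psum_snoc_last {n : ℕ} (w : Fin n → Fin 3) (s : Fin 3) :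
    psum (Fin.snoc w s : Fin (n + 1) → Fin 3) (n + 1) = psum w n + stepVal s := by
  simp only [psum, Finset.sum_filter, Fin.sum_univ_castSucc]
  simp only [Fin.snoc_castSucc, Fin.snoc_last]
  congr 1
  · refine Finset.sum_congr rfl fun i _ => ?_
    have := i.2
    simp [this, Nat.lt_succ_of_lt this]
  · simp

lemma sum_walkWeight_succ (pm p0 p1 : ℝ) (n : ℕ) (f : (Fin (n + 1) → Fin 3) → ℝ) :
    ∑ w, walkWeight pm p0 p1 w * f w =
      ∑ w : Fin n → Fin 3, walkWeight pm p0 p1 w *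
        (pm * f (Fin.snoc w 0) + p0 * f (Fin.snoc w 1) + p1 * f (Fin.snoc w 2)) := by
  rw [← (Fin.snocEquiv fun _ => Fin 3).sum_comp, Fintype.sum_prod_type_right]
  refine Finset.sum_congr rfl fun w _ => ?_
  have hw (s : Fin 3) : walkWeight pm p0 p1 (Fin.snoc w s : Fin (n + 1) → Fin 3) =
      walkWeight pm p0 p1 w * stepWeight pm p0 p1 s := by
    simp [walkWeight, Fin.prod_univ_castSucc]
  change ∑ s, walkWeight pm p0 p1 (Fin.snoc w s) * f (Fin.snoc w s) = _
  simp only [hw, Fin.sum_univ_three, stepWeight]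
  simp
  ring

/-- The upper tail `h ↦ ℙ(S_m ≥ h)` of the walk with step law `q δ₋₁ + r δ₀ + q δ₁`. -/
noncomputable def walkTail (q r : ℝ) : ℕ → ℤ → ℝ
  | 0, h => if h ≤ 0 then 1 else 0
  | m + 1, h => q * walkTail q r m (h + 1) + r * walkTail q r m h + q * walkTail q r m (h - 1)

/-- The upper tail `h ↦ ℙ(max_{j ≤ m} S_j ≥ h)`, `h ≥ 0`, of the running maximum, as given by the
reflection principle. -/
noncomputable def maxTail (q r : ℝ) (m : ℕ) (h : ℤ) : ℝ :=
  walkTail q r m h + walkTail q r m (h + 1)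

section MaxTail

variable {q r : ℝ}

lemma walkTail_antitone (hq : 0 ≤ q) (hr : 0 ≤ r) (m : ℕ) : Antitone (walkTail q r m) := by
  induction m with
  | zero =>
    intro a b hab
    simp only [walkTail]
    split_ifs <;> first | lia | norm_num
  | succ m ih =>
    intro a b hab
    simp only [walkTail]
    gcongr <;> apply ih <;> lia

lemma walkTail_add_walkTail_one_sub (hqr : 2 * q + r = 1) (m : ℕ) (h : ℤ) :
    walkTail q r m h + walkTail q r m (1 - h) = 1 := by
  induction m generalizing h with
  | zero =>
    simp only [walkTail]
    split_ifs <;> first | lia | norm_num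
  | succ m ih =>
    have h1 := ih (h + 1)
    have h2 := ih h
    have h3 := ih (h - 1)
    rw [show 1 - (h + 1) = 1 - h - 1 by ring] at h1
    rw [show 1 - (h - 1) = 1 - h + 1 by ring] at h3
    simp only [walkTail]
    linear_combination q * h1 + r * h2 + q * h3 + hqr

lemma maxTail_antitone (hq : 0 ≤ q) (hr : 0 ≤ r) (m : ℕ) : Antitone (maxTail q r m) :=
  fun a b hab => add_le_add (walkTail_antitone hq hr m hab)
    (walkTail_antitone hq hr m (by lia))

lemma maxTail_zero_right (hqr : 2 * q + r = 1) (m : ℕ) : maxTail q r m 0 = 1 := by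
  simpa [maxTail] using walkTail_add_walkTail_one_sub hqr m 0

lemma maxTail_succ (m : ℕ) (h : ℤ) :
    maxTail q r (m + 1) h =
      q * maxTail q r m (h + 1) + r * maxTail q r m h + q * maxTail q r m (h - 1) := by
  simp only [maxTail, walkTail, add_sub_cancel_right, sub_add_cancel]
  ring

lemma maxTail_zero_of_pos {h : ℤ} (hh : 0 < h) : maxTail q r 0 h = 0 := by
  simp only [maxTail, walkTail]
  rw [if_neg (by lia), if_neg (by lia), add_zero]

/-- The probability that a walk which is at `x`, with last nonzero sign `ε` and `c` sign changes so
far, has at least `k` sign changes after `m` further steps. For walks which have not left the origin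
yet (`ε = 0`), this is only a bound: an upper bound for `e = 0`, a lower bound for `e = 2`. -/
noncomputable def changeProb (q r : ℝ) (e k : ℤ) (m : ℕ) (x ε c : ℤ) : ℝ :=
  if k ≤ c then 1
  else maxTail q r m (|x| + 2 * (k - c) - 1 + if ε = 0 then e else 0)

/-- The expected value of `changeProb` after one step. -/
noncomputable def changeProbStep (q r : ℝ) (e k : ℤ) (m : ℕ) (x ε c : ℤ) : ℝ :=
  let next (y : ℤ) : ℝ := changeProb q r e k m y (if y = 0 then ε else y.sign)
    (c + if ε * y < 0 then 1 else 0)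
  q * next (x - 1) + r * next x + q * next (x + 1)

lemma changeProbStep_of_le (hqr : 2 * q + r = 1) {e k : ℤ} (m : ℕ) (x ε : ℤ) {c : ℤ}
    (hc : k ≤ c) : changeProbStep q r e k m x ε c = changeProb q r e k (m + 1) x ε c := by
  have (b : Prop) [Decidable b] : k ≤ c + if b then 1 else 0 := by split_ifs <;> lia
  simp only [changeProbStep, changeProb, hc, this, if_true]
  linear_combination hqr

lemma changeProbStep_of_one (hqr : 2 * q + r = 1) (e k : ℤ) (m : ℕ) {x : ℤ} (c : ℤ)
    (hx : 0 ≤ x) : changeProbStep q r e k m x 1 c = changeProb q r e k (m + 1) x 1 c := by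
  by_cases hc : k ≤ c
  · exact changeProbStep_of_le hqr m x 1 hc
  have hε (y : ℤ) : (if y = 0 then (1 : ℤ) else y.sign) ≠ 0 := by
    split_ifs with h <;> simp [h]
  simp only [changeProbStep, changeProb, hε, if_false, one_mul, add_zero, hc, one_ne_zero]
  rw [maxTail_succ, if_neg (by lia : ¬ x < 0), if_neg (by lia : ¬ x + 1 < 0),
    abs_of_nonneg hx, abs_of_nonneg (by lia : 0 ≤ x + 1)]
  rcases hx.eq_or_lt with rfl | hx
  · have h1 : (if k ≤ c + 1 then (1 : ℝ) else maxTail q r m (1 + 2 * (k - (c + 1)) - 1)) =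
        maxTail q r m (0 + 2 * (k - c) - 1 - 1) := by
      split_ifs with h
      · rw [show 0 + 2 * (k - c) - 1 - 1 = 0 by lia, maxTail_zero_right hqr]
      · congr 1; ring
    simp only [zero_sub, abs_neg, abs_one, neg_lt_zero, zero_lt_one, if_true, add_zero, if_neg hc,
      h1]
    ring_nf
  · rw [if_neg (by lia : ¬ x - 1 < 0), abs_of_nonneg (by lia : 0 ≤ x - 1)]
    simp only [add_zero, if_neg hc]
    ring_nf

lemma changeProbStep_neg (e k : ℤ) (m : ℕ) (x ε c : ℤ) :
    changeProbStep q r e k m (-x) (-ε) c = changeProbStep q r e k m x ε c := by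
  have hnext (y : ℤ) : changeProb q r e k m (-y) (if -y = 0 then -ε else (-y).sign)
      (c + if -ε * -y < 0 then 1 else 0) = changeProb q r e k m y (if y = 0 then ε else y.sign)
      (c + if ε * y < 0 then 1 else 0) := by
    simp only [changeProb, abs_neg, neg_mul_neg, Int.sign_neg, neg_eq_zero]
    by_cases hy : y = 0 <;> simp [hy]
  simp only [changeProbStep]
  rw [show -x - 1 = -(x + 1) by ring, show -x + 1 = -(x - 1) by ring, hnext, hnext, hnext]
  ring

lemma changeProbStep_eq (hqr : 2 * q + r = 1) (e k : ℤ) (m : ℕ) {x ε : ℤ} (c : ℤ)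
    (hε : ε = 1 ∨ ε = -1) (hx : ε * x = |x|) :
    changeProbStep q r e k m x ε c = changeProb q r e k (m + 1) x ε c := by
  have hx0 := abs_nonneg x
  rcases hε with rfl | rfl
  · exact changeProbStep_of_one hqr e k m c (by lia)
  · rw [← changeProbStep_neg, neg_neg, changeProbStep_of_one hqr e k m c (by lia)]
    simp [changeProb]

lemma changeProbStep_origin {e k : ℤ} (m : ℕ) {c : ℤ} (hc : ¬ k ≤ c) :
    changeProbStep q r e k m 0 0 c =
      r * maxTail q r m (2 * (k - c) - 1 + e) + 2 * q * maxTail q r m (2 * (k - c)) := by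
  simp [changeProbStep, changeProb, hc]
  ring_nf

lemma changeProbStep_le (hq : 0 ≤ q) (hr : 0 ≤ r) (hqr : 2 * q + r = 1) (k : ℤ) (m : ℕ)
    {x ε : ℤ} (c : ℤ) (hε : ε = 0 ∨ ε = 1 ∨ ε = -1) (hx : ε * x = |x|) :
    changeProbStep q r 0 k m x ε c ≤ changeProb q r 0 k (m + 1) x ε c := by
  rcases hε with rfl | hε
  · obtain rfl : x = 0 := by simpa [eq_comm] using hx
    by_cases hc : k ≤ c
    · exact (changeProbStep_of_le hqr m 0 0 hc).le
    rw [changeProbStep_origin m hc, changeProb, if_neg hc, maxTail_succ]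
    have h := mul_le_mul_of_nonneg_left
      (maxTail_antitone hq hr m (by lia : 2 * (k - c) - 1 - 1 ≤ 2 * (k - c))) hq
    simp only [abs_zero, zero_add, if_true, add_zero, sub_add_cancel]
    linarith
  · exact (changeProbStep_eq hqr 0 k m c hε hx).le

lemma le_changeProbStep (hq : 0 ≤ q) (hr : 0 ≤ r) (hqr : 2 * q + r = 1) (k : ℤ) (m : ℕ)
    {x ε : ℤ} (c : ℤ) (hε : ε = 0 ∨ ε = 1 ∨ ε = -1) (hx : ε * x = |x|) :
    changeProb q r 2 k (m + 1) x ε c ≤ changeProbStep q r 2 k m x ε c := by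
  rcases hε with rfl | hε
  · obtain rfl : x = 0 := by simpa [eq_comm] using hx
    by_cases hc : k ≤ c
    · exact (changeProbStep_of_le hqr m 0 0 hc).ge
    rw [changeProbStep_origin m hc, changeProb, if_neg hc, maxTail_succ]
    have h := mul_le_mul_of_nonneg_left
      (maxTail_antitone hq hr m (by lia : 2 * (k - c) ≤ 2 * (k - c) - 1 + 2 + 1)) hq
    simp only [abs_zero, zero_add, if_true]
    rw [show 2 * (k - c) - 1 + 2 - 1 = 2 * (k - c) by ring]
    linarith
  · exact (changeProbStep_eq hqr 2 k m c hε hx).ge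

/-- `changeProb` along a walk, averaged over all walks of length `n`. -/
noncomputable def meanChangeProb (q r : ℝ) (e k : ℤ) (m n : ℕ) : ℝ :=
  ∑ w : Fin n → Fin 3, walkWeight q r q w *
    changeProb q r e k m (psum w n) (lastSign (psum w) n) (signChanges w)

lemma changeProb_snoc (e k : ℤ) (m : ℕ) {n : ℕ} (w : Fin n → Fin 3) (s : Fin 3) :
    changeProb q r e k m (psum (Fin.snoc w s : Fin (n + 1) → Fin 3) (n + 1))
        (lastSign (psum (Fin.snoc w s : Fin (n + 1) → Fin 3)) (n + 1))
        (signChanges (Fin.snoc w s : Fin (n + 1) → Fin 3)) =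
      changeProb q r e k m (psum w n + stepVal s)
        (if psum w n + stepVal s = 0 then lastSign (psum w) n else (psum w n + stepVal s).sign)
        (signChanges w + if lastSign (psum w) n * (psum w n + stepVal s) < 0 then 1 else 0) := by
  have hle : ∀ j ≤ n, psum (Fin.snoc w s : Fin (n + 1) → Fin 3) j = psum w j :=
    fun j hj => psum_snoc_of_le w s hj
  have hsc : signChanges (Fin.snoc w s : Fin (n + 1) → Fin 3) = signChanges w +
      if lastSign (psum w) n * (psum w n + stepVal s) < 0 then 1 else 0 := by
    change seqSignChanges _ _ = seqSignChanges _ _ + _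
    rw [seqSignChanges_succ, seqSignChanges_congr hle, lastSign_congr hle, psum_snoc_last]
  rw [hsc, lastSign, lastSign_congr hle, psum_snoc_last]
  push_cast
  rfl

lemma meanChangeProb_succ (e k : ℤ) (m n : ℕ) :
    meanChangeProb q r e k m (n + 1) = ∑ w : Fin n → Fin 3, walkWeight q r q w *
      changeProbStep q r e k m (psum w n) (lastSign (psum w) n) (signChanges w) := by
  rw [meanChangeProb, sum_walkWeight_succ]
  refine Finset.sum_congr rfl fun w _ => ?_
  simp only [changeProb_snoc, changeProbStep]
  simp [stepVal, sub_eq_add_neg]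

lemma walkWeight_nonneg {pm p0 p1 : ℝ} (hm : 0 ≤ pm) (h0 : 0 ≤ p0) (h1 : 0 ≤ p1) {n : ℕ}
    (w : Fin n → Fin 3) : 0 ≤ walkWeight pm p0 p1 w := by
  refine Finset.prod_nonneg fun i _ => ?_
  unfold stepWeight
  split_ifs <;> assumption

lemma meanChangeProb_le (hq : 0 ≤ q) (hr : 0 ≤ r) (hqr : 2 * q + r = 1) (k : ℤ) (m n : ℕ) :
    meanChangeProb q r 0 k m n ≤ meanChangeProb q r 0 k (m + n) 0 := by
  induction n generalizing m with
  | zero => rfl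
  | succ n ih =>
    rw [show m + (n + 1) = m + 1 + n by ring]
    refine le_trans ?_ (ih (m + 1))
    rw [meanChangeProb_succ]
    exact Finset.sum_le_sum fun w _ => mul_le_mul_of_nonneg_left
      (changeProbStep_le hq hr hqr k m _ (lastSign_cases _ _) (lastSign_mul_self _ _))
      (walkWeight_nonneg hq hr hq w)

lemma le_meanChangeProb (hq : 0 ≤ q) (hr : 0 ≤ r) (hqr : 2 * q + r = 1) (k : ℤ) (m n : ℕ) :
    meanChangeProb q r 2 k (m + n) 0 ≤ meanChangeProb q r 2 k m n := by
  induction n generalizing m with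
  | zero => rfl
  | succ n ih =>
    rw [show m + (n + 1) = m + 1 + n by ring]
    refine (ih (m + 1)).trans ?_
    rw [meanChangeProb_succ]
    exact Finset.sum_le_sum fun w _ => mul_le_mul_of_nonneg_left
      (le_changeProbStep hq hr hqr k m _ (lastSign_cases _ _) (lastSign_mul_self _ _))
      (walkWeight_nonneg hq hr hq w)

lemma meanChangeProb_zero_right (e : ℤ) {k : ℤ} (hk : 0 < k) (m : ℕ) :
    meanChangeProb q r e k m 0 = maxTail q r m (2 * k - 1 + e) := by
  have h0 (w : Fin 0 → Fin 3) : signChanges w = 0 := by simp [signChanges]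
  simp [meanChangeProb, changeProb, h0, walkWeight, psum, lastSign, hk.not_ge]

lemma meanChangeProb_zero_left {e : ℤ} (he : 0 ≤ e) (k n : ℕ) :
    meanChangeProb q r e k 0 n =
      ∑ w : Fin n → Fin 3 with k ≤ signChanges w, walkWeight q r q w := by
  rw [meanChangeProb, Finset.sum_filter]
  refine Finset.sum_congr rfl fun w _ => ?_
  simp only [changeProb, Nat.cast_le]
  split_ifs with h h' <;> simp
  all_goals
    right
    apply maxTail_zero_of_pos
    have := abs_nonneg (psum w n)
    lia

lemma sum_walkWeight (pm p0 p1 : ℝ) (n : ℕ) :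
    ∑ w : Fin n → Fin 3, walkWeight pm p0 p1 w = (pm + p0 + p1) ^ n := by
  induction n with
  | zero => simp [walkWeight]
  | succ n ih =>
    have h := sum_walkWeight_succ pm p0 p1 n fun _ => 1
    simp only [mul_one] at h
    rw [h, ← Finset.sum_mul, ih, pow_succ]

lemma sum_walkSignW_div_pow {pm p0 : ℝ} (hP : pm + p0 + pm ≠ 0) (n K : ℕ) :
    (∑ k ∈ Finset.range K, walkSignW pm p0 pm n k) / (pm + p0 + pm) ^ n =
      1 - ∑ w : Fin n → Fin 3 with K ≤ signChanges w,
        walkWeight (pm / (pm + p0 + pm)) (p0 / (pm + p0 + pm)) (pm / (pm + p0 + pm)) w := by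
  set P := pm + p0 + pm with hPdef
  have hw (w : Fin n → Fin 3) :
      walkWeight (pm / P) (p0 / P) (pm / P) w = walkWeight pm p0 pm w / P ^ n := by
    have hs (s : Fin 3) : stepWeight (pm / P) (p0 / P) (pm / P) s = stepWeight pm p0 pm s / P := by
      unfold stepWeight
      split_ifs <;> rfl
    simp [walkWeight, hs, Finset.prod_div_distrib]
  have hsum : ∑ k ∈ Finset.range K, walkSignW pm p0 pm n k =
      ∑ w : Fin n → Fin 3 with ¬ K ≤ signChanges w, walkWeight pm p0 pm w := by
    simp only [walkSignW, Finset.sum_filter]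
    rw [Finset.sum_comm]
    refine Finset.sum_congr rfl fun w _ => ?_
    simp
  simp only [hw, ← Finset.sum_div]
  rw [hsum, eq_sub_iff_add_eq, ← add_div, Finset.sum_filter_not_add_sum_filter, sum_walkWeight,
    ← hPdef, div_self (pow_ne_zero n hP)]

end MaxTail

section Limit

open MeasureTheory ProbabilityTheory Filter Topology

/-- The law of a single step: `q δ₋₁ + r δ₀ + q δ₁`. -/
noncomputable def stepLaw (q r : ℝ) : Measure ℝ :=
  ENNReal.ofReal q • Measure.dirac (-1) + ENNReal.ofReal r • Measure.dirac 0 +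
    ENNReal.ofReal q • Measure.dirac 1

variable {q r : ℝ}

lemma isProbabilityMeasure_stepLaw (hq : 0 ≤ q) (hr : 0 ≤ r) (hqr : 2 * q + r = 1) :
    IsProbabilityMeasure (stepLaw q r) := by
  constructor
  simp only [stepLaw, Measure.add_apply, Measure.smul_apply, measure_univ, smul_eq_mul, mul_one]
  rw [← ENNReal.ofReal_add hq hr, ← ENNReal.ofReal_add (by positivity) hq,
    show q + r + q = 1 by linarith, ENNReal.ofReal_one]

lemma integrable_stepLaw (f : ℝ → ℝ) : Integrable f (stepLaw q r) := by
  refine ((Integrable.smul_measure ?_ ?_).add_measure (Integrable.smul_measure ?_ ?_)).add_measure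
    (Integrable.smul_measure ?_ ?_) <;> simp [integrable_dirac]

lemma integral_stepLaw (hq : 0 ≤ q) (hr : 0 ≤ r) (f : ℝ → ℝ) :
    ∫ x, f x ∂stepLaw q r = q * f (-1) + r * f 0 + q * f 1 := by
  have hi (c a : ℝ) : Integrable f (ENNReal.ofReal c • Measure.dirac a) :=
    Integrable.smul_measure (by simp [integrable_dirac]) (by simp)
  rw [stepLaw, integral_add_measure ((hi _ _).add_measure (hi _ _)) (hi _ _),
    integral_add_measure (hi _ _) (hi _ _)]
  simp [integral_smul_measure, hq, hr]

lemma measureReal_conv_stepLaw (hq : 0 ≤ q) (hr : 0 ≤ r) (μ : Measure ℝ) [IsFiniteMeasure μ]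
    (h : ℝ) : (μ ∗ stepLaw q r).real (Set.Ici h) =
      q * μ.real (Set.Ici (h + 1)) + r * μ.real (Set.Ici h) + q * μ.real (Set.Ici (h - 1)) := by
  have hshift (a : ℝ) : (Measure.dirac a ∗ μ) (Set.Ici h) = μ (Set.Ici (h - a)) := by
    rw [Measure.dirac_conv, Measure.map_apply (by fun_prop) measurableSet_Ici]
    congr 1
    ext y
    simp
  have htop (c : ℝ) (s : Set ℝ) : ENNReal.ofReal c * μ s ≠ ⊤ :=
    ENNReal.mul_ne_top ENNReal.ofReal_ne_top (measure_ne_top μ s)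
  rw [stepLaw, Measure.conv_comm, Measure.add_conv, Measure.add_conv, Measure.conv_smul_left,
    Measure.conv_smul_left, Measure.conv_smul_left, Measure.real]
  simp only [Measure.add_apply, Measure.smul_apply, smul_eq_mul, hshift]
  rw [ENNReal.toReal_add (ENNReal.add_ne_top.2 ⟨htop _ _, htop _ _⟩) (htop _ _),
    ENNReal.toReal_add (htop _ _) (htop _ _)]
  simp [ENNReal.toReal_mul, hq, hr, Measure.real]

lemma measureReal_sum_eq_walkTail {Ω : Type*} [MeasurableSpace Ω] {P : Measure Ω}
    [IsProbabilityMeasure P] {X : ℕ → Ω → ℝ} (hq : 0 ≤ q) (hr : 0 ≤ r)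
    (hX : ∀ i, Measurable (X i)) (hindep : iIndepFun X P) (hlaw : ∀ i, P.map (X i) = stepLaw q r)
    (m : ℕ) (h : ℤ) :
    (P.map (∑ k ∈ Finset.range m, X k)).real (Set.Ici (h : ℝ)) = walkTail q r m h := by
  induction m generalizing h with
  | zero =>
    rw [Finset.sum_range_zero, map_measureReal_apply (by fun_prop) measurableSet_Ici]
    by_cases hh : h ≤ 0
    · have : ((0 : Ω → ℝ) ⁻¹' Set.Ici (h : ℝ)) = Set.univ := by ext; simp [hh]
      simp [this, walkTail, hh]
    · have : ((0 : Ω → ℝ) ⁻¹' Set.Ici (h : ℝ)) = ∅ := by ext; simpa using hh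
      simp [this, walkTail, hh]
  | succ m ih =>
    rw [Finset.sum_range_succ, (hindep.indepFun_sum_range_succ hX m).map_add_eq_map_conv_map
      (by fun_prop) (hX m), hlaw, measureReal_conv_stepLaw hq hr, walkTail, ← ih, ← ih, ← ih]
    push_cast
    rfl

/-- The central limit theorem for `walkTail`. -/
lemma tendsto_walkTail (hq : 0 < q) (hr : 0 ≤ r) (hqr : 2 * q + r = 1) {h : ℕ → ℤ} {y : ℝ}
    (hh : Tendsto (fun n : ℕ => (h n : ℝ) / √n) atTop (𝓝 y)) :
    Tendsto (fun n => walkTail q r n (h n)) atTop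
      (𝓝 ((gaussianReal 0 (2 * q).toNNReal).real (Set.Ici y))) := by
  have := isProbabilityMeasure_stepLaw hq.le hr hqr
  have hv : (2 * q).toNNReal ≠ 0 := by simpa using hq
  have := nullSingletonClass_gaussianReal (μ := 0) hv
  let P : Measure (ℕ → ℝ) := Measure.infinitePi fun _ => stepLaw q r
  let X : ℕ → (ℕ → ℝ) → ℝ := fun i ω => ω i
  have hX (i : ℕ) : Measurable (X i) := measurable_pi_apply i
  have hindep : iIndepFun X P := iIndepFun_infinitePi (X := fun _ x => x) fun _ => measurable_id
  have hlaw (i : ℕ) : P.map (X i) = stepLaw q r := Measure.infinitePi_map_eval _ i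
  have hint (f : ℝ → ℝ) (hf : Measurable f) :
      ∫ ω, f (X 0 ω) ∂P = q * f (-1) + r * f 0 + q * f 1 := by
    rw [← integral_stepLaw hq.le hr, ← hlaw 0,
      integral_map (hX 0).aemeasurable hf.aestronglyMeasurable]
  have hmean : P[X 0] = 0 := by
    rw [hint (fun x => x) measurable_id]
    ring
  have hvar : Var[X 0; P] = 2 * q := by
    rw [variance_of_integral_eq_zero (hX 0).aemeasurable hmean, hint (fun x => x ^ 2) (by fun_prop)]
    ring
  have hmem : MemLp (X 0) 2 P := by
    rw [memLp_two_iff_integrable_sq (hX 0).aestronglyMeasurable]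
    have h2 : Integrable (fun x : ℝ => x ^ 2) (P.map (X 0)) := hlaw 0 ▸ integrable_stepLaw _
    exact h2.comp_measurable (hX 0)
  have hclt := tendstoInDistribution_inv_sqrt_mul_sum_sub (X := X) (P := P)
    (Y := (id : ℝ → ℝ)) (P' := gaussianReal 0 (2 * q).toNNReal) (by rw [hvar]; exact .id) hmem
    hindep fun i => ⟨(hX i).aemeasurable, (hX 0).aemeasurable, by rw [hlaw, hlaw]⟩
  have hshift := hclt.add_of_tendstoInMeasure_const
    (Y := fun n _ => -((h n : ℝ) / √n)) (c := -y)
    (tendstoInMeasure_of_tendsto_ae (fun _ => by fun_prop) (ae_of_all _ fun _ => hh.neg))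
    (fun _ => by fun_prop)
  have hlim := ProbabilityMeasure.tendsto_measure_of_null_frontier_of_tendsto' hshift.tendsto
    (E := Set.Ici 0) (by
      simp only [ProbabilityMeasure.coe_mk, frontier_Ici]
      rw [Measure.map_apply (by fun_prop) (measurableSet_singleton _)]
      convert measure_singleton (μ := gaussianReal 0 (2 * q).toNNReal) y using 2
      ext x
      simp [← sub_eq_add_neg, sub_eq_zero])
  simp only [ProbabilityMeasure.coe_mk] at hlim
  have := Measure.isProbabilityMeasure_map hshift.aemeasurable_limit
  have hlim' := (ENNReal.tendsto_toReal (measure_ne_top _ _)).comp hlim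
  convert hlim'.congr' ?_ using 2
  · rw [Measure.map_apply (by fun_prop) measurableSet_Ici, Measure.real]
    congr 2
    ext x
    simp
  · filter_upwards [eventually_gt_atTop 0] with n hn
    have hn' : 0 < √(n : ℝ) := by positivity
    rw [← measureReal_sum_eq_walkTail hq.le hr hX hindep hlaw, Measure.real,
      Function.comp_apply, Measure.map_apply (by fun_prop) measurableSet_Ici,
      Measure.map_apply (by fun_prop) measurableSet_Ici]
    congr 2
    ext ω
    simp only [Set.mem_preimage, Set.mem_Ici, Pi.add_apply, hmean, mul_zero, sub_zero,
      Finset.sum_apply, ← sub_eq_add_neg, sub_nonneg]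
    rw [← div_eq_inv_mul, div_le_div_iff_of_pos_right hn']

lemma tendsto_maxTail (hq : 0 < q) (hr : 0 ≤ r) (hqr : 2 * q + r = 1) {h : ℕ → ℤ} {y : ℝ}
    (hh : Tendsto (fun n : ℕ => (h n : ℝ) / √n) atTop (𝓝 y)) :
    Tendsto (fun n => maxTail q r n (h n)) atTop
      (𝓝 (2 * (gaussianReal 0 (2 * q).toNNReal).real (Set.Ici y))) := by
  have h1 : Tendsto (fun n : ℕ => ((h n + 1 : ℤ) : ℝ) / √n) atTop (𝓝 y) := by
    have h0 : Tendsto (fun n : ℕ => 1 / √(n : ℝ)) atTop (𝓝 0) :=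
      tendsto_const_nhds.div_atTop (Real.tendsto_sqrt_atTop.comp tendsto_natCast_atTop_atTop)
    simpa [add_div] using hh.add h0
  rw [two_mul]
  exact (tendsto_walkTail hq hr hqr hh).add (tendsto_walkTail hq hr hqr h1)

lemma one_sub_two_mul_gaussianReal_Ici {v : NNReal} (hv : v ≠ 0) (x : ℝ) :
    1 - 2 * (gaussianReal 0 v).real (Set.Ici (2 * x)) =
      ∫ t in (0:ℝ)..x, 4 * gaussianPDFReal 0 v (2 * t) := by
  have hi := integrable_gaussianPDFReal 0 v
  have htail : (gaussianReal 0 v).real (Set.Ici (2 * x)) =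
      ∫ t in Set.Ioi (2 * x), gaussianPDFReal 0 v t := by
    rw [Measure.real, gaussianReal_apply_eq_integral 0 hv, integral_Ici_eq_integral_Ioi,
      ENNReal.toReal_ofReal]
    exact integral_nonneg fun t => gaussianPDFReal_nonneg 0 v t
  have hneg : ∫ t in Set.Iic 0, gaussianPDFReal 0 v t =
      ∫ t in Set.Ioi 0, gaussianPDFReal 0 v t := by
    have := integral_comp_neg_Ioi 0 (gaussianPDFReal 0 v)
    rw [neg_zero] at this
    rw [← this]
    simp [gaussianPDFReal_def]
  have hhalf := intervalIntegral.integral_Iic_add_Ioi (b := 0) hi.integrableOn hi.integrableOn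
  rw [integral_gaussianPDFReal_eq_one 0 hv, hneg] at hhalf
  have hsub := intervalIntegral.integral_Ioi_sub_Ioi' (a := 0) (b := 2 * x) hi.integrableOn
    hi.integrableOn
  rw [intervalIntegral.integral_const_mul, intervalIntegral.integral_comp_mul_left _ two_ne_zero,
    mul_zero, ← hsub, htail, smul_eq_mul]
  linarith

lemma four_mul_gaussianPDFReal_two_mul {q σ : ℝ} (hq : 0 < q) (hσ : σ ^ 2 = q / 2) (t : ℝ) :
    4 * gaussianPDFReal 0 (2 * q).toNNReal (2 * t) =
      √(2 / (Real.pi * σ ^ 2)) * Real.exp (-t ^ 2 / (2 * σ ^ 2)) := by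
  have hπ := Real.pi_pos
  rw [gaussianPDFReal_def, hσ, Real.coe_toNNReal _ (by positivity)]
  have h1 : √(2 / (Real.pi * (q / 2))) = 4 * (√(2 * Real.pi * (2 * q)))⁻¹ := by
    rw [← Real.sqrt_inv, show (4 : ℝ) = √(4 ^ 2) by simp, ← Real.sqrt_mul (by positivity)]
    congr 1
    field_simp
    norm_num
  have h2 : -(2 * t - 0) ^ 2 / (2 * (2 * q)) = -t ^ 2 / (2 * (q / 2)) := by
    field_simp
    ring
  simp only [h1, h2]
  ring

lemma tendsto_threshold {x : ℝ} (hx : 0 ≤ x) (c : ℤ) :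
    Tendsto (fun n : ℕ => ((2 * (⌊x * √n⌋₊ + 1 : ℕ) - 1 + c : ℤ) : ℝ) / √n) atTop
      (𝓝 (2 * x)) := by
  have hsqrt : Tendsto (fun n : ℕ => √(n : ℝ)) atTop atTop :=
    Real.tendsto_sqrt_atTop.comp tendsto_natCast_atTop_atTop
  have h1 : Tendsto (fun n : ℕ => (⌊x * √n⌋₊ : ℝ) / √n) atTop (𝓝 x) :=
    (tendsto_nat_floor_mul_div_atTop hx).comp hsqrt
  have h2 : Tendsto (fun n : ℕ => (1 + c : ℝ) / √n) atTop (𝓝 0) :=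
    tendsto_const_nhds.div_atTop hsqrt
  convert (h1.const_mul 2).add h2 using 2
  · push_cast
    ring
  · simp

end Limit

/-- **Limit law for sign changes of walks, zero drift**: `X_n/√n` converges in
distribution to the half-normal law `H(σ)` with `σ = (1/2)√(P″(1)/P(1))`. -/
theorem walks_sign_changes_half_normal (pm p0 p1 : ℝ)
    (hpm : 0 < pm) (hp0 : 0 < p0) (hp1 : 0 < p1) (hdrift : p1 = pm) :
    let P1 : ℝ := pm + p0 + p1
    let σ : ℝ := (1 / 2) * Real.sqrt (2 * pm / P1)
    ∀ x : ℝ, 0 ≤ x →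
      Filter.Tendsto
        (fun n : ℕ =>
          (∑ k ∈ Finset.range (⌊x * Real.sqrt n⌋₊ + 1), walkSignW pm p0 p1 n k) / P1 ^ n)
        Filter.atTop
        (nhds (∫ t in (0:ℝ)..x,
          Real.sqrt (2 / (Real.pi * σ ^ 2)) * Real.exp (-t ^ 2 / (2 * σ ^ 2)))) := by
  intro P1 σ x hx
  subst hdrift
  have hP : 0 < P1 := by positivity
  set q := p1 / P1 with hq_def
  set r := p0 / P1 with hr_def
  have hq : 0 < q := by positivity
  have hr : 0 < r := by positivity
  have hqr : 2 * q + r = 1 := by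
    rw [hq_def, hr_def]
    field_simp
    simp only [P1]
    ring
  have hσ : σ ^ 2 = q / 2 := by
    simp only [σ]
    rw [mul_pow, Real.sq_sqrt (by positivity), hq_def]
    ring
  have hv : (2 * q).toNNReal ≠ 0 := by simpa using hq
  simp only [← four_mul_gaussianPDFReal_two_mul hq hσ]
  rw [← one_sub_two_mul_gaussianReal_Ici hv]
  simp only [P1, sum_walkSignW_div_pow hP.ne']
  refine Filter.Tendsto.const_sub 1 ?_
  refine tendsto_of_tendsto_of_tendsto_of_le_of_le
    (tendsto_maxTail hq hr.le hqr (tendsto_threshold hx 2))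
    (tendsto_maxTail hq hr.le hqr (tendsto_threshold hx 0)) (fun n => ?_) (fun n => ?_)
  · have h := le_meanChangeProb hq.le hr.le hqr (⌊x * √n⌋₊ + 1 : ℕ) 0 n
    rwa [meanChangeProb_zero_left zero_le_two, meanChangeProb_zero_right _ (by positivity),
      zero_add] at h
  · have h := meanChangeProb_le hq.le hr.le hqr (⌊x * √n⌋₊ + 1 : ℕ) 0 n
    rwa [meanChangeProb_zero_left le_rfl, meanChangeProb_zero_right _ (by positivity),
      zero_add] at h
end

section
/- Fix positive reals p₋₁, p₀, p₁ with p₁ < p₋₁ (negative drift), and let P(1) = p₋₁ + p₀ + p₁. Let f_{n,h} denote the total weight of Motzkin walks of length n whose height equals h, and define X_n by P[X_n = h] = f_{n,h}/P(1)ⁿ. Then X_n converges in distribution to a geometric law: for every fixed h ∈ ℕ, lim_{n→∞} f_{n,h}/P(1)ⁿ = (p₁/p₋₁)^h · (1 − p₁/p₋₁). -/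
open scoped BigOperators Classical

theorem psum_zero {n : ℕ} (w : Fin n → Fin 3) : psum w 0 = 0 := by
  simp [psum]

theorem psum_cons_succ {n : ℕ} (s : Fin 3) (w : Fin n → Fin 3) (j : ℕ) :
    psum (Fin.cons s w : Fin (n + 1) → Fin 3) (j + 1) = stepVal s + psum w j := by
  simp [psum, Finset.sum_filter, Fin.sum_univ_succ]

theorem le_height_iff {n : ℕ} (w : Fin n → Fin 3) (m : ℕ) :
    m ≤ height w ↔ ∃ j ≤ n, (m : ℤ) ≤ psum w j := by
  rcases Nat.eq_zero_or_pos m with rfl | hm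
  · simp only [zero_le, true_iff]
    exact ⟨0, Nat.zero_le n, by simp [psum_zero]⟩
  · rw [height, Finset.le_sup_iff (by simpa using hm)]
    constructor
    · rintro ⟨j, hj, h⟩
      exact ⟨j, by simpa [Nat.lt_succ_iff] using hj, by omega⟩
    · rintro ⟨j, hj, h⟩
      exact ⟨j, by simpa [Nat.lt_succ_iff] using hj, by omega⟩

theorem succ_le_height_cons_iff {n : ℕ} (s : Fin 3) (w : Fin n → Fin 3) (k m : ℕ)
    (hm : (m : ℤ) + stepVal s = k + 1) :
    k + 1 ≤ height (Fin.cons s w : Fin (n + 1) → Fin 3) ↔ m ≤ height w := by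
  rw [le_height_iff, le_height_iff]
  constructor
  · rintro ⟨j, hj, h⟩
    cases j with
    | zero => rw [psum_zero] at h; omega
    | succ j =>
      rw [psum_cons_succ] at h
      exact ⟨j, by omega, by omega⟩
  · rintro ⟨j, hj, h⟩
    exact ⟨j + 1, by omega, by rw [psum_cons_succ]; omega⟩

/-- Total weight of walks of length `n` of height at least `k`. -/
noncomputable def heightTailW (pm p0 p1 : ℝ) (n k : ℕ) : ℝ :=
  ∑ w : Fin n → Fin 3, if k ≤ height w then walkWeight pm p0 p1 w else 0

theorem heightW_eq_sub (pm p0 p1 : ℝ) (n h : ℕ) :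
    heightW pm p0 p1 n h = heightTailW pm p0 p1 n h - heightTailW pm p0 p1 n (h + 1) := by
  rw [heightW, heightTailW, heightTailW, Finset.sum_filter, ← Finset.sum_sub_distrib]
  refine Finset.sum_congr rfl fun w _ => ?_
  split_ifs <;> first | omega | simp

theorem sum_walk_succ {n : ℕ} (f : (Fin (n + 1) → Fin 3) → ℝ) :
    ∑ w, f w = ∑ s : Fin 3, ∑ w : Fin n → Fin 3, f (Fin.cons s w) := by
  rw [← Fintype.sum_prod_type']
  exact (Fintype.sum_equiv (Fin.consEquiv fun _ => Fin 3) _ _ fun _ => rfl).symm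

theorem walkWeight_cons (pm p0 p1 : ℝ) {n : ℕ} (s : Fin 3) (w : Fin n → Fin 3) :
    walkWeight pm p0 p1 (Fin.cons s w : Fin (n + 1) → Fin 3) =
      stepWeight pm p0 p1 s * walkWeight pm p0 p1 w := by
  simp [walkWeight, Fin.prod_univ_succ]

theorem heightTailW_zero_right (pm p0 p1 : ℝ) (n : ℕ) :
    heightTailW pm p0 p1 n 0 = (pm + p0 + p1) ^ n := by
  induction n with
  | zero => simp [heightTailW, walkWeight]
  | succ n ih =>
    simp only [heightTailW, zero_le, if_true] at ih ⊢
    simp only [sum_walk_succ, walkWeight_cons, ← Finset.mul_sum, ih, Fin.sum_univ_three]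
    simp [stepWeight]
    ring

theorem heightTailW_zero_succ (pm p0 p1 : ℝ) (k : ℕ) :
    heightTailW pm p0 p1 0 (k + 1) = 0 := by
  simp [heightTailW, height, psum]

theorem heightTailW_succ_succ (pm p0 p1 : ℝ) (n k : ℕ) :
    heightTailW pm p0 p1 (n + 1) (k + 1) =
      pm * heightTailW pm p0 p1 n (k + 2) + p0 * heightTailW pm p0 p1 n (k + 1) +
        p1 * heightTailW pm p0 p1 n k := by
  have hdown (w : Fin n → Fin 3) := succ_le_height_cons_iff 0 w k (k + 2) (by simp [stepVal]; ring)
  have hflat (w : Fin n → Fin 3) := succ_le_height_cons_iff 1 w k (k + 1) (by simp [stepVal])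
  have hup (w : Fin n → Fin 3) := succ_le_height_cons_iff 2 w k k (by simp [stepVal])
  simp only [heightTailW, sum_walk_succ, Fin.sum_univ_three, hdown, hflat, hup, walkWeight_cons,
    Finset.mul_sum, mul_ite, mul_zero]
  simp [stepWeight]

/-- A solution of the tail recursion of a lazy walk with step probabilities `a`, `b`, `c`
(down, flat, up) and negative drift converges to the geometric tail `(c / a) ^ k`. -/
theorem tendsto_tail_recursion {a b c : ℝ} (ha : 0 < a) (hb : 0 < b) (hc : 0 < c)
    (hca : c < a) (habc : a + b + c = 1) {u : ℕ → ℕ → ℝ} (hu0 : ∀ n, u n 0 = 1)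
    (hinit : ∀ k, u 0 (k + 1) = 0)
    (hrec : ∀ n k, u (n + 1) (k + 1) = a * u n (k + 2) + b * u n (k + 1) + c * u n k) (k : ℕ) :
    Filter.Tendsto (fun n => u n k) Filter.atTop (nhds ((c / a) ^ k)) := by
  set r := c / a with hr
  have hr0 : 0 < r := div_pos hc ha
  have hr1 : r < 1 := (div_lt_one ha).2 hca
  have hcr : c = a * r := by rw [hr]; field_simp
  have hnonneg : ∀ n k, 0 ≤ u n k := by
    intro n
    induction n with
    | zero => rintro (_ | k) <;> simp [hu0, hinit]
    | succ n ih =>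
      rintro (_ | k)
      · simp [hu0]
      · rw [hrec]
        have := ih (k + 2); have := ih (k + 1); have := ih k
        positivity
  have hle : ∀ n k, u n k ≤ r ^ k := by
    intro n
    induction n with
    | zero =>
      rintro (_ | k)
      · simp [hu0]
      · rw [hinit]; positivity
    | succ n ih =>
      rintro (_ | k)
      · simp [hu0]
      · rw [hrec]
        calc a * u n (k + 2) + b * u n (k + 1) + c * u n k
            ≤ a * r ^ (k + 2) + b * r ^ (k + 1) + c * r ^ k := by
              gcongr <;> exact ih _
          _ = (a + b + c) * r ^ (k + 1) := by rw [hcr]; ring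
          _ = r ^ (k + 1) := by rw [habc, one_mul]
  have hstep : ∀ n k, u n k ≤ u (n + 1) k := by
    intro n
    induction n with
    | zero =>
      rintro (_ | k)
      · simp [hu0]
      · rw [hinit]; exact hnonneg _ _
    | succ n ih =>
      rintro (_ | k)
      · simp [hu0]
      · rw [hrec n, hrec (n + 1)]
        gcongr <;> exact ih _
  have hlim : ∀ k, ∃ l, Filter.Tendsto (fun n => u n k) Filter.atTop (nhds l) := fun k =>
    ⟨_, tendsto_atTop_ciSup (monotone_nat_of_le_succ fun n => hstep n k)
      ⟨r ^ k, by rintro _ ⟨n, rfl⟩; exact hle n k⟩⟩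
  choose v hv using hlim
  have hv0 : v 0 = 1 := tendsto_nhds_unique (hv 0) (by simp [hu0])
  have hvrec : ∀ k, v (k + 1) = a * v (k + 2) + b * v (k + 1) + c * v k := fun k => by
    refine tendsto_nhds_unique ((hv (k + 1)).comp (Filter.tendsto_add_atTop_nat 1)) ?_
    simpa only [Function.comp_def, hrec] using
      (((hv (k + 2)).const_mul a).add ((hv (k + 1)).const_mul b)).add ((hv k).const_mul c)
  have hdiff : ∀ k, v (k + 1) - v k = r ^ k * (v 1 - 1) := by
    intro k
    induction k with
    | zero => simp [hv0]
    | succ k ih =>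
      rw [pow_succ, mul_right_comm, ← ih]
      refine mul_left_cancel₀ ha.ne' ?_
      have h1 := hvrec k
      have hb' : b = 1 - a - c := by linarith
      rw [hb', hcr] at h1
      linear_combination -h1
  have hform : ∀ k, (1 - r) * (v k - 1) = (1 - r ^ k) * (v 1 - 1) := by
    intro k
    induction k with
    | zero => simp [hv0]
    | succ k ih => linear_combination ih + (1 - r) * hdiff k
  have hpow : Filter.Tendsto (fun k => r ^ k) Filter.atTop (nhds 0) :=
    tendsto_pow_atTop_nhds_zero_of_lt_one hr0.le hr1
  have hvlim : Filter.Tendsto v Filter.atTop (nhds 0) :=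
    squeeze_zero (fun k => ge_of_tendsto' (hv k) fun n => hnonneg n k)
      (fun k => le_of_tendsto' (hv k) fun n => hle n k) hpow
  have hv1 : (1 - r) * (0 - 1) = (1 - 0) * (v 1 - 1) := by
    refine tendsto_nhds_unique ((hvlim.sub_const 1).const_mul (1 - r)) ?_
    simpa only [hform] using (hpow.const_sub 1).mul_const (v 1 - 1)
  have hvk : v k = r ^ k := by
    refine mul_left_cancel₀ (sub_pos.2 hr1).ne' ?_
    linear_combination hform k - (1 - r ^ k) * hv1
  exact hvk ▸ hv k

/-- **Limit law for the height of Motzkin walks, negative drift**: the height converges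
in distribution to `Geom(p₁/p₋₁)`. -/
theorem height_geometric (pm p0 p1 : ℝ)
    (hpm : 0 < pm) (hp0 : 0 < p0) (hp1 : 0 < p1) (hdrift : p1 < pm) :
    let P1 : ℝ := pm + p0 + p1
    ∀ h : ℕ,
      Filter.Tendsto (fun n : ℕ => heightW pm p0 p1 n h / P1 ^ n)
        Filter.atTop (nhds ((p1 / pm) ^ h * (1 - p1 / pm))) := by
  intro P1 h
  have hP : 0 < P1 := by positivity
  have htail (k : ℕ) : Filter.Tendsto (fun n => heightTailW pm p0 p1 n k / P1 ^ n)
      Filter.atTop (nhds ((p1 / pm) ^ k)) := by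
    have hratio : p1 / P1 / (pm / P1) = p1 / pm := div_div_div_cancel_right₀ hP.ne' _ _
    rw [← hratio]
    refine tendsto_tail_recursion (b := p0 / P1)
      (u := fun n k => heightTailW pm p0 p1 n k / P1 ^ n) (by positivity) (by positivity)
      (by positivity) (by gcongr) ?_ (fun n => ?_) (fun k => ?_) (fun n k => ?_) k
    · rw [← add_div, ← add_div]; exact div_self hP.ne'
    · rw [heightTailW_zero_right]; exact div_self (pow_pos hP n).ne'
    · rw [heightTailW_zero_succ, zero_div]
    · rw [heightTailW_succ_succ]
      field_simp
      ring
  have hdiff := (htail h).sub (htail (h + 1))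
  simp only [← sub_div, ← heightW_eq_sub] at hdiff
  convert hdiff using 2
  ring
end
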